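/- For every integer i ≥ 1, every matrix A ∈ M_{i,i}(𝒪) with det A ≠ 0, and all nonnegative integers n₁, …, n_i: μ_i({v ∈ 𝒪^i : |(adj(A)·v)_k| = q^{−n_k} for all k ∈ {1, …, i}}) ≤ |det A|^{−(i−1)} · q^{−(n₁ + ⋯ + n_i)}, where adj(A) denotes the adjugate matrix of A. -/

import Mathlib

/-!
Let `T = adj A`, so `det T = (det A) ^ (i - 1)`. The set in question lies in the preimage under `T`
of the box `∏ₖ X ^ nₖ 𝒪`. That box has measure `q ^ (-∑ nₖ)` (`measure_box`), and an invertible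
matrix scales Haar measure on `K ^ i` by `|det|` (`scales_of_det_ne_zero`), so the preimage has
measure `|det A| ^ (-(i - 1)) * q ^ (-∑ nₖ)`.

The scaling statement is reduced to diagonal matrices and transvections, which generate the
invertible matrices. By uniqueness of Haar measure it is enough to compute the factor on a single
box (`scales_of_one`): a diagonal matrix pulls boxes back to boxes, and every transvection preserves
some box. Uniqueness of Haar measure requires `K ^ i` to be locally compact, which follows from the
compactness of `𝒪`, a continuous image of the compact space `ℕ → 𝔽_q` (`isCompact_integers`).
-/

open MeasureTheory
open scoped Classical ENNReal

noncomputable section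

variable (F : Type*) [Field F] [Fintype F]

/-- The absolute value `|x| = q^{-v(x)}` on the Laurent series field `K = 𝔽_q((X))`,
where `v` is the `X`-adic valuation (the order of vanishing). -/
def absv (x : LaurentSeries F) : ℝ :=
  if x = 0 then 0 else (Fintype.card F : ℝ) ^ (-(HahnSeries.order x))

instance : MeasurableSpace (LaurentSeries F) := borel _

instance (m n : ℕ) : MeasurableSpace (Matrix (Fin m) (Fin n) (LaurentSeries F)) := borel _

instance (d : ℕ) : MeasurableSpace (Fin d → LaurentSeries F) := borel _

/-- the set of matrices with all entries in the valuation ring `𝒪 = 𝔽_q[[X]] = {x : |x| ≤ 1}`. -/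
def intMat (m n : ℕ) : Set (Matrix (Fin m) (Fin n) (LaurentSeries F)) :=
  {s | ∀ k l, absv F (s k l) ≤ 1}

/-- sup norm of a vector in `K^d` -/
def supNorm {d : ℕ} (v : Fin d → LaurentSeries F) : ℝ := ⨆ j, absv F (v j)

/-- the `i × i` minor of a `d × i` matrix with row set `I`. -/
def minor {d i : ℕ} (s : Matrix (Fin d) (Fin i) (LaurentSeries F))
    (I : {I : Finset (Fin d) // I.card = i}) : LaurentSeries F :=
  (s.submatrix (fun a : Fin i => ((I.1.orderIsoOfFin I.2 a : {x // x ∈ I.1}) : Fin d)) id).det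

/-- The norm `‖s₁ ∧ ⋯ ∧ s_i‖` of the wedge product of the columns of a `d × i` matrix:
the maximum of the absolute values of its `i × i` minors. -/
def wedgeNorm {d i : ℕ} (s : Matrix (Fin d) (Fin i) (LaurentSeries F)) : ℝ :=
  ⨆ I : {I : Finset (Fin d) // I.card = i}, absv F (minor F s I)

/-- `X ∈ K`, the uniformizer. -/
def Xu : LaurentSeries F := HahnSeries.single 1 1

/-- the diagonal element `g_t = diag(X^{-nt} I_m, X^{mt} I_n)`. -/
def gMat (m n : ℕ) (t : ℤ) : Matrix (Fin (m + n)) (Fin (m + n)) (LaurentSeries F) :=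
  Matrix.reindex finSumFinEquiv finSumFinEquiv
    (Matrix.fromBlocks ((Xu F ^ (-(n * t))) • (1 : Matrix (Fin m) (Fin m) (LaurentSeries F))) 0 0
      ((Xu F ^ ((m : ℤ) * t)) • (1 : Matrix (Fin n) (Fin n) (LaurentSeries F))))

/-- the upper block-unipotent element `u_s` with blocks `(I_m, s; 0, I_n)`. -/
def uMat {m n : ℕ} (s : Matrix (Fin m) (Fin n) (LaurentSeries F)) :
    Matrix (Fin (m + n)) (Fin (m + n)) (LaurentSeries F) :=
  Matrix.reindex finSumFinEquiv finSumFinEquiv (Matrix.fromBlocks 1 s 0 1)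

/-- the exponent `β_i = m/i` for `i ≤ m` and `n/(m+n-i)` for `i > m`. -/
def betaE (m n i : ℕ) : ℝ := if i ≤ m then (m : ℝ) / i else (n : ℝ) / ((m + n - i : ℕ) : ℝ)

end

section Helpers

open WithZero

variable {F : Type*} [Field F] [Fintype F] {d : ℕ}

/-! ### The absolute value and the compactness of `𝒪` -/

lemma one_lt_card_real : (1 : ℝ) < Fintype.card F := by
  exact_mod_cast Fintype.one_lt_card

/-- Comparison of the real absolute value `absv` with the `X`-adic valuation of Mathlib, which
defines the topology of `K`. -/
lemma absv_le_iff (x : LaurentSeries F) (n : ℤ) :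
    absv F x ≤ (Fintype.card F : ℝ) ^ (-n) ↔ Valued.v x ≤ exp (-n) := by
  rw [LaurentSeries.valuation_le_iff_coeff_lt_eq_zero]
  have hq := one_lt_card_real (F := F)
  unfold absv
  split_ifs with h
  · subst h
    simp only [HahnSeries.coeff_zero, implies_true, iff_true]
    positivity
  · rw [zpow_le_zpow_iff_right₀ hq, neg_le_neg_iff]
    constructor
    · intro hn k hk
      exact HahnSeries.coeff_eq_zero_of_lt_order (hk.trans_le hn)
    · intro hc
      by_contra! hlt
      exact h (HahnSeries.coeff_order_eq_zero.1 (hc _ hlt))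

lemma absv_mul (x y : LaurentSeries F) : absv F (x * y) = absv F x * absv F y := by
  have hq := one_lt_card_real (F := F)
  by_cases hx : x = 0
  · simp [absv, hx]
  by_cases hy : y = 0
  · simp [absv, hy]
  rw [absv, absv, absv, if_neg hx, if_neg hy, if_neg (mul_ne_zero hx hy),
    HahnSeries.order_mul hx hy, ← zpow_add₀ (by positivity)]
  congr 1
  ring

lemma absv_one : absv F (1 : LaurentSeries F) = 1 := by
  simp [absv]

/-- The absolute value `absv`, bundled as a monoid homomorphism. -/
noncomputable def absvHom (F : Type*) [Field F] [Fintype F] : LaurentSeries F →* ℝ where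
  toFun := absv F
  map_one' := absv_one
  map_mul' := absv_mul

lemma absv_nonneg (x : LaurentSeries F) : 0 ≤ absv F x := by
  unfold absv; split_ifs <;> positivity

lemma absv_pos {x : LaurentSeries F} (hx : x ≠ 0) : 0 < absv F x := by
  have hq := one_lt_card_real (F := F)
  rw [absv, if_neg hx]; positivity

/-- The valuation ring `𝒪` is compact. -/
lemma isCompact_integers : IsCompact {x : LaurentSeries F | Valued.v x ≤ exp (-(0 : ℤ))} := by
  let _ : TopologicalSpace F := ⊥
  have : DiscreteTopology F := ⟨rfl⟩
  let f : (ℕ → F) → LaurentSeries F := fun a =>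
    ((PowerSeries.mk a : PowerSeries F) : LaurentSeries F)
  have hf : Continuous f := by
    rw [continuous_iff_continuousAt]
    intro a U hU
    obtain ⟨γ, hγ⟩ := Valued.mem_nhds.mp hU
    set N : ℤ := -(log (MonoidWithZeroHom.ValueGroup₀.embedding γ.1) - 1) with hN
    have hNγ : exp (-N) < MonoidWithZeroHom.ValueGroup₀.embedding γ.1 := by
      rw [← lt_log_iff_exp_lt (by simp), hN]
      simp
    -- Sequences agreeing with `a` below `N` form a neighbourhood of `a`.
    have hcoord : ∀ᶠ b in nhds a, ∀ n ∈ Finset.range N.toNat, b n = a n := by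
      rw [Filter.eventually_all_finset]
      intro n _
      have hmem : {a n} ∈ nhds (a n) := (isOpen_discrete _).mem_nhds rfl
      exact (continuous_apply n).continuousAt.eventually_mem hmem
    rw [Filter.mem_map]
    filter_upwards [hcoord] with b hb
    refine hγ ?_
    rw [Set.mem_ofPred_eq, Valuation.restrict_lt_iff_lt_embedding]
    refine lt_of_le_of_lt (LaurentSeries.valuation_le_iff_coeff_lt_eq_zero F |>.mpr ?_) hNγ
    intro n hn
    rw [HahnSeries.coeff_sub, sub_eq_zero]
    simp only [f, PowerSeries.coeff_coe]
    split_ifs with h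
    · rfl
    · simpa using hb n.natAbs (by rw [Finset.mem_range]; omega)
  have hr : {x : LaurentSeries F | Valued.v x ≤ exp (-(0 : ℤ))} = Set.range f := by
    ext x
    rw [Set.mem_ofPred_eq, neg_zero, exp_zero, LaurentSeries.val_le_one_iff_eq_coe]
    constructor
    · rintro ⟨p, rfl⟩
      exact ⟨fun n => PowerSeries.coeff n p, by simp only [f]; congr 1; ext; simp⟩
    · rintro ⟨a, rfl⟩
      exact ⟨_, rfl⟩
  rw [hr]
  exact isCompact_range hf

/-! ### Boxes and their measure -/

/-- The box `∏ₖ X ^ (e k) 𝒪` in `K ^ d`. -/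
def box (e : Fin d → ℤ) : Set (Fin d → LaurentSeries F) :=
  {v | ∀ k, Valued.v (v k) ≤ exp (-(e k))}

lemma isClopen_box (e : Fin d → ℤ) : IsClopen (box (F := F) e) := by
  have : box (F := F) e = ⋂ k, (fun v => v k) ⁻¹' {x | Valued.v x ≤ exp (-(e k))} := by
    ext v; simp [box]
  rw [this]
  refine isClopen_iInter_of_finite fun k => IsClopen.preimage ?_ (continuous_apply k)
  obtain ⟨x, hx⟩ := LaurentSeries.valuation_surjective F (exp (-(e k)))
  have hx0 : Valued.v.restrict x ≠ 0 := by
    rw [Valuation.ne_zero_iff]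
    rintro rfl
    rw [map_zero] at hx
    exact exp_ne_zero hx.symm
  have := Valued.isClopen_closedBall (LaurentSeries F) hx0
  simpa only [Valuation.restrict_le_iff, hx] using this

instance : BorelSpace (Fin d → LaurentSeries F) := ⟨rfl⟩

lemma isCompact_box_zero : IsCompact (box (F := F) (0 : Fin d → ℤ)) := by
  have : box (F := F) (0 : Fin d → ℤ) =
      Set.univ.pi fun _ => {x | Valued.v x ≤ exp (-(0 : ℤ))} := by
    ext v; simp [box]
  rw [this]
  exact isCompact_univ_pi fun _ => isCompact_integers

instance : LocallyCompactSpace (Fin d → LaurentSeries F) :=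
  isCompact_box_zero.locallyCompactSpace_of_mem_nhds_of_addGroup (x := 0)
    ((isClopen_box _).isOpen.mem_nhds (by simp [box]))

/-- Every box is compact, being contained in the image of `𝒪 ^ d` under a diagonal map. -/
lemma isCompact_box (e : Fin d → ℤ) : IsCompact (box (F := F) e) := by
  let g : (Fin d → LaurentSeries F) → (Fin d → LaurentSeries F) :=
    fun v k => HahnSeries.single (e k) 1 * v k
  have hg : Continuous g := by fun_prop
  refine (isCompact_box_zero.image hg).of_isClosed_subset (isClopen_box e).isClosed ?_
  intro v hv
  refine ⟨fun k => HahnSeries.single (-e k) 1 * v k, fun k => ?_, ?_⟩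
  · have := hv k
    rw [LaurentSeries.valuation_le_iff_coeff_lt_eq_zero] at this ⊢
    intro n hn
    have h2 := HahnSeries.coeff_single_mul_add (r := (1:F)) (x := v k) (a := n + e k) (b := - e k)
    simp only [add_neg_cancel_right, one_mul] at h2
    rw [h2]
    exact this _ (by simp at hn; omega)
  · ext1 k
    simp [g, ← mul_assoc, HahnSeries.single_mul_single]

variable {μ : Measure (Fin d → LaurentSeries F)}

/-- `box e` is the disjoint union of `q` translates of `box (e + δₖ)`. -/
lemma measure_box_step [μ.IsAddLeftInvariant] (e : Fin d → ℤ) (k : Fin d) :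
    μ (box e) = Fintype.card F * μ (box (e + Pi.single k 1)) := by
  have hU : box (F := F) e =
      ⋃ a : F, (fun v => (-Pi.single k (HahnSeries.single (e k) a)) + v) ⁻¹'
        box (e + Pi.single k 1) := by
    ext v
    simp only [Set.mem_iUnion, Set.mem_preimage, box, Set.mem_ofPred_eq,
      LaurentSeries.valuation_le_iff_coeff_lt_eq_zero]
    constructor
    · intro h
      refine ⟨(v k).coeff (e k), fun j n hn => ?_⟩
      by_cases hj : j = k
      · subst hj
        simp only [Pi.add_apply, Pi.neg_apply, Pi.single_eq_same, HahnSeries.coeff_add,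
          HahnSeries.coeff_neg, HahnSeries.coeff_single] at hn ⊢
        split_ifs with hne
        · rw [hne]; simp
        · rw [neg_zero, zero_add]; exact h j n (by omega)
      · simp only [Pi.add_apply, Pi.neg_apply, Pi.single_eq_of_ne hj, add_zero, neg_zero,
          zero_add] at hn ⊢
        exact h j n hn
    · rintro ⟨a, h⟩ j n hn
      have := h j n
      by_cases hj : j = k
      · subst hj
        simp only [Pi.add_apply, Pi.neg_apply, Pi.single_eq_same, HahnSeries.coeff_add,
          HahnSeries.coeff_neg, HahnSeries.coeff_single] at this
        rw [if_neg hn.ne, neg_zero, zero_add] at this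
        exact this (by omega)
      · simp only [Pi.add_apply, Pi.neg_apply, Pi.single_eq_of_ne hj, add_zero, neg_zero,
          zero_add] at this
        exact this hn
  rw [hU, measure_iUnion]
  · simp_rw [measure_preimage_add]
    simp [tsum_fintype]
  · intro a b hab
    rw [Function.onFun, Set.disjoint_left]
    intro v ha hb
    -- The coefficient of `X ^ (e k)` in `v k` determines the translate containing `v`.
    have key : ∀ c : F, v ∈ (fun v => (-Pi.single k (HahnSeries.single (e k) c)) + v) ⁻¹'
        box (e + Pi.single k 1) → (v k).coeff (e k) = c := by
      intro c hc
      have := hc k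
      rw [LaurentSeries.valuation_le_iff_coeff_lt_eq_zero] at this
      have := this (e k) (by simp)
      simp only [Pi.add_apply, Pi.neg_apply, Pi.single_eq_same, HahnSeries.coeff_add,
          HahnSeries.coeff_neg, HahnSeries.coeff_single_same] at this
      exact (neg_add_eq_zero.1 this).symm
    exact hab ((key a ha).symm.trans (key b hb))
  · intro a
    exact (measurable_const_add _) (isClopen_box _).isOpen.measurableSet

/-- A translation-invariant measure giving `𝒪 ^ d` mass `1` gives `∏ₖ X ^ (e k) 𝒪` mass
`q ^ (-∑ e k)`. -/
lemma measure_box [μ.IsAddLeftInvariant] (h1 : μ (box 0) = 1) (e : Fin d → ℤ) :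
    μ (box e) = ENNReal.ofReal ((Fintype.card F : ℝ) ^ (-∑ k, e k)) := by
  have hq := one_lt_card_real (F := F)
  have hstep : ∀ (e : Fin d → ℤ) (k : Fin d),
      (μ (box e) = ENNReal.ofReal ((Fintype.card F : ℝ) ^ (-∑ k, e k))) ↔
      (μ (box (e + Pi.single k 1)) =
        ENNReal.ofReal ((Fintype.card F : ℝ) ^ (-∑ j, (e + Pi.single k 1 : Fin d → ℤ) j))) := by
    intro e k
    have hs : ∑ j, (e + Pi.single k 1 : Fin d → ℤ) j = ∑ j, e j + 1 := by
      simp [Finset.sum_add_distrib]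
    rw [measure_box_step e k, hs]
    have : (Fintype.card F : ℝ) ^ (-∑ k, e k) =
        Fintype.card F * (Fintype.card F : ℝ) ^ (-(∑ k, e k + 1)) := by
      rw [← zpow_one_add₀ (by positivity)]; congr 1; ring
    rw [this, ENNReal.ofReal_mul (by positivity), ENNReal.ofReal_natCast]
    exact ENNReal.mul_right_inj (by simp) (by simp)
  have hall : ∀ (k : Fin d) (n : ℤ) (e : Fin d → ℤ),
      (μ (box e) = ENNReal.ofReal ((Fintype.card F : ℝ) ^ (-∑ k, e k))) →
      (μ (box (e + Pi.single k n)) =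
        ENNReal.ofReal ((Fintype.card F : ℝ) ^ (-∑ j, (e + Pi.single k n : Fin d → ℤ) j))) := by
    intro k n e he
    induction n with
    | zero => simpa using he
    | succ n ih =>
      have := (hstep _ k).1 ih
      rwa [add_assoc, ← Pi.single_add] at this
    | pred n ih =>
      refine (hstep _ k).2 ?_
      rwa [add_assoc, ← Pi.single_add, sub_add_cancel]
  have hfin : ∀ s : Finset (Fin d),
      μ (box (∑ k ∈ s, Pi.single k (e k))) = ENNReal.ofReal
        ((Fintype.card F : ℝ) ^ (-∑ j, (∑ k ∈ s, Pi.single k (e k) : Fin d → ℤ) j)) := by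
    intro s
    induction s using Finset.induction_on with
    | empty => simp [h1]
    | insert a s ha ih =>
      rw [Finset.sum_insert ha, add_comm]
      exact hall _ _ _ ih
  have := hfin Finset.univ
  rwa [Finset.univ_sum_single] at this

/-! ### Scaling of Haar measure under linear maps -/

/-- The automorphism of the topological group `K ^ d` given by an invertible matrix. -/
noncomputable def mulVecEquiv (T : Matrix (Fin d) (Fin d) (LaurentSeries F)) (hT : T.det ≠ 0) :
    (Fin d → LaurentSeries F) ≃ₜ+ (Fin d → LaurentSeries F) where
  toFun v := T.mulVec v
  invFun v := T⁻¹.mulVec v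
  left_inv v := by simp [Matrix.nonsing_inv_mul _ (Ne.isUnit hT)]
  right_inv v := by simp [Matrix.mul_nonsing_inv _ (Ne.isUnit hT)]
  map_add' v w := T.mulVec_add v w
  continuous_toFun := continuous_const.matrix_mulVec continuous_id
  continuous_invFun := continuous_const.matrix_mulVec continuous_id

/-- `T` scales the `μ`-measure of compact sets by the factor `|det T|`. This is phrased with
preimages, so that the sets involved are measurable by continuity of `T`. -/
def Scales (μ : Measure (Fin d → LaurentSeries F))
    (T : Matrix (Fin d) (Fin d) (LaurentSeries F)) : Prop :=
  ∀ E, IsCompact E → ENNReal.ofReal (absv F T.det) * μ (T.mulVec ⁻¹' E) = μ E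

/-- By uniqueness of Haar measure, `T` multiplies the measure of all compact sets by the same
factor, so this factor can be read off from one box. -/
lemma scales_of_one [μ.IsAddHaarMeasure] (T : Matrix (Fin d) (Fin d) (LaurentSeries F))
    (hT : T.det ≠ 0) (e : Fin d → ℤ)
    (h : ENNReal.ofReal (absv F T.det) * μ (T.mulVec ⁻¹' (box e)) = μ (box e)) :
    Scales μ T := by
  have hh : (μ.map (mulVecEquiv T hT)).IsAddHaarMeasure := (mulVecEquiv T hT).isAddHaarMeasure_map μ
  have key : ∀ E, IsCompact E →
      μ (T.mulVec ⁻¹' E) = ((μ.map (mulVecEquiv T hT)).addHaarScalarFactor μ : ℝ≥0∞) * μ E := by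
    intro E hE
    have := Measure.measure_isAddInvariant_eq_smul_of_isCompact_closure
      (μ.map (mulVecEquiv T hT)) μ (s := E) hE.closure
    rw [Measure.map_apply (f := mulVecEquiv T hT)
      (mulVecEquiv T hT).toHomeomorph.continuous.measurable hE.isClosed.measurableSet] at this
    exact this
  intro E hE
  have h0 : μ (box (F := F) e) ≠ 0 :=
    ((isClopen_box e).isOpen.measure_pos μ ⟨0, by simp [box]⟩).ne'
  rw [key _ (isCompact_box e), ← mul_assoc] at h
  rw [key E hE, ← mul_assoc]
  have h1 := (ENNReal.mul_left_inj h0 (isCompact_box e).measure_lt_top.ne).1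
    (h.trans (one_mul _).symm)
  rw [h1, one_mul]

lemma scales_mul {A B : Matrix (Fin d) (Fin d) (LaurentSeries F)} (hA : A.det ≠ 0)
    (h1 : Scales μ A) (h2 : Scales μ B) : Scales μ (A * B) := by
  intro E hE
  have hc : IsCompact (A.mulVec ⁻¹' E) :=
    (mulVecEquiv A hA).toHomeomorph.isCompact_preimage.2 hE
  have hp : (A * B).mulVec ⁻¹' E = B.mulVec ⁻¹' (A.mulVec ⁻¹' E) := by
    ext v; simp [Matrix.mulVec_mulVec]
  rw [Matrix.det_mul, absv_mul, ENNReal.ofReal_mul (absv_nonneg _), mul_assoc, hp, h2 _ hc, h1 _ hE]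

/-- If `T = 1 + c E_ij` with `|c| ≤ q ^ N`, then `T` preserves the box whose `j`-th side is
`X ^ N 𝒪` and whose other sides are `𝒪`. -/
lemma scales_transvection [μ.IsAddHaarMeasure]
    (t : Matrix.TransvectionStruct (Fin d) (LaurentSeries F)) : Scales μ t.toMatrix := by
  obtain ⟨N, hN⟩ : ∃ N : ℤ, Valued.v t.c ≤ exp N := by
    by_cases hc : Valued.v t.c = (0 : WithZero (Multiplicative ℤ))
    · exact ⟨0, by rw [hc]; exact zero_le⟩
    · exact ⟨log (Valued.v t.c), (exp_log hc).ge⟩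
  refine scales_of_one _ (by simp) (Pi.single t.j N) ?_
  have : t.toMatrix.mulVec ⁻¹' (box (Pi.single t.j N)) = box (F := F) (Pi.single t.j N) := by
    ext v
    have hi : ∀ k, t.toMatrix.mulVec v k = v k + if k = t.i then t.c * v t.j else 0 := by
      intro k
      simp only [Matrix.TransvectionStruct.toMatrix, Matrix.transvection, Matrix.add_mulVec,
        Matrix.one_mulVec, Pi.add_apply, Matrix.single_mulVec,
        Function.update_apply, Pi.zero_apply]
    have hmul : Valued.v (v t.j) ≤ exp (-N) → Valued.v (t.c * v t.j) ≤ exp (-(0 : ℤ)) := by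
      intro h
      rw [map_mul]
      calc _ ≤ exp N * exp (-N) := mul_le_mul' hN h
        _ = _ := by rw [← exp_add]; simp
    have hj : t.toMatrix.mulVec v t.j = v t.j := by rw [hi, if_neg t.hij.symm, add_zero]
    have hji : (Pi.single t.j N : Fin d → ℤ) t.i = 0 := by simp [t.hij]
    simp only [box, Set.mem_preimage, Set.mem_ofPred_eq]
    constructor
    · intro h k
      have hk := h k
      by_cases hki : k = t.i
      · have h2 := h t.j
        rw [hj, Pi.single_eq_same] at h2
        subst hki
        rw [hi, if_pos rfl, hji] at hk
        rw [hji]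
        have := Valuation.map_sub_le _ hk (hmul h2)
        simpa using this
      · rwa [hi, if_neg hki, add_zero] at hk
    · intro h k
      have hk := h k
      by_cases hki : k = t.i
      · have h2 := h t.j
        rw [Pi.single_eq_same] at h2
        subst hki
        rw [hi, if_pos rfl]
        rw [hji] at hk ⊢
        exact Valuation.map_add_le _ hk (hmul h2)
      · rwa [hi, if_neg hki, add_zero]
  rw [this, Matrix.TransvectionStruct.det, absv_one]
  simp

/-- The preimage of `𝒪 ^ d` under a diagonal matrix is a box. -/
lemma scales_diagonal [μ.IsAddHaarMeasure] (h1 : μ (box 0) = 1) (D : Fin d → LaurentSeries F)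
    (hD : (Matrix.diagonal D).det ≠ 0) : Scales μ (Matrix.diagonal D) := by
  have hq := one_lt_card_real (F := F)
  have hD0 : ∀ k, D k ≠ 0 := by
    rw [Matrix.det_diagonal, Finset.prod_ne_zero_iff] at hD
    exact fun k => hD k (Finset.mem_univ k)
  refine scales_of_one _ hD 0 ?_
  have hp : (Matrix.diagonal D).mulVec ⁻¹' (box 0) = box (F := F) fun k => -(D k).order := by
    ext v
    simp only [box, Set.mem_preimage, Set.mem_ofPred_eq, Matrix.mulVec_diagonal]
    refine forall_congr' fun k => ?_
    rw [← absv_le_iff, ← absv_le_iff, absv_mul, Pi.zero_apply, neg_zero, zpow_zero,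
      show absv F (D k) = (Fintype.card F : ℝ) ^ (-(D k).order) from if_neg (hD0 k),
      zpow_neg, inv_mul_le_iff₀ (by positivity), mul_one, neg_neg]
  have hdet : absv F (Matrix.diagonal D).det = (Fintype.card F : ℝ) ^ (-∑ k, (D k).order) := by
    rw [Matrix.det_diagonal]
    change absvHom F _ = _
    rw [map_prod, ← Finset.sum_neg_distrib]
    induction (Finset.univ : Finset (Fin d)) using Finset.induction_on with
    | empty => simp
    | insert a s ha ih =>
      rw [Finset.prod_insert ha, Finset.sum_insert ha, zpow_add₀ (by positivity), ih]
      congr 1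
      exact if_neg (hD0 a)
  rw [hp, measure_box h1, h1, hdet, ← ENNReal.ofReal_mul (by positivity), ← zpow_add₀ (by positivity)]
  simp

lemma scales_of_det_ne_zero [μ.IsAddHaarMeasure] (h1 : μ (box 0) = 1)
    (T : Matrix (Fin d) (Fin d) (LaurentSeries F)) (hT : T.det ≠ 0) : Scales μ T :=
  Matrix.diagonal_transvection_induction_of_det_ne_zero (Scales μ) T hT (scales_diagonal h1)
    scales_transvection fun _ _ hA _ => scales_mul hA

end Helpers

/-! ### The adjugate estimate -/

/-- **An adjugate estimate (cf. Claim 1 in Step 1).** For every `i ≥ 1`, every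
`A ∈ M_{i,i}(𝒪)` with `det A ≠ 0` and all nonnegative integers `n₁, …, n_i`,
`μ_i({v ∈ 𝒪^i : |(adj(A)v)_k| = q^{-n_k} for all k}) ≤ |det A|^{-(i-1)} q^{-(n₁+⋯+n_i)}`,
where `μ_i` is the additive Haar measure on `K^i` normalized so that `μ_i(𝒪^i) = 1`. -/
theorem stmt12 (F : Type*) [Field F] [Fintype F] (i : ℕ) (hi : 1 ≤ i)
    (μ : MeasureTheory.Measure (Fin i → LaurentSeries F))
    (hinv : ∀ a : Fin i → LaurentSeries F, μ.map (fun v => a + v) = μ)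
    (hnorm : μ {v | ∀ j, absv F (v j) ≤ 1} = 1)
    (A : Matrix (Fin i) (Fin i) (LaurentSeries F)) (hA : ∀ k l, absv F (A k l) ≤ 1)
    (hdet : A.det ≠ 0) (nn : Fin i → ℕ) :
    μ {v | (∀ j, absv F (v j) ≤ 1) ∧
        ∀ k, absv F ((A.adjugate.mulVec v) k) = (Fintype.card F : ℝ) ^ (-(nn k : ℤ))}
      ≤ ENNReal.ofReal ((absv F A.det) ^ (-((i : ℤ) - 1)) *
          (Fintype.card F : ℝ) ^ (-(∑ k, nn k : ℤ))) := by
  have hq := one_lt_card_real (F := F)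
  have hbox0 : {v : Fin i → LaurentSeries F | ∀ j, absv F (v j) ≤ 1} = box 0 := by
    ext v
    refine forall_congr' fun k => ?_
    rw [← absv_le_iff]; simp
  have h1 : μ (box 0) = 1 := hbox0 ▸ hnorm
  have : μ.IsAddLeftInvariant := ⟨hinv⟩
  have : μ.IsAddHaarMeasure :=
    Measure.isAddHaarMeasure_of_isCompact_nonempty_interior μ (box 0) isCompact_box_zero
      (by rw [(isClopen_box _).isOpen.interior_eq]; exact ⟨0, by simp [box]⟩)
      (by simp [h1]) (by simp [h1])
  have hadj : A.adjugate.det = A.det ^ (i - 1) := by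
    rw [Matrix.det_adjugate, Fintype.card_fin]
  have hadj0 : A.adjugate.det ≠ 0 := hadj ▸ pow_ne_zero _ hdet
  have hscale := scales_of_det_ne_zero h1 A.adjugate hadj0 (box fun k => (nn k : ℤ))
    (isCompact_box _)
  have hpos := absv_pos hdet
  have habs : absv F A.adjugate.det = (absv F A.det) ^ (i - 1) := by
    rw [hadj]; exact map_pow (absvHom F) _ _
  have hexp : (absv F A.det) ^ (-((i : ℤ) - 1)) = ((absv F A.det) ^ (i - 1))⁻¹ := by
    rw [zpow_neg, ← zpow_natCast, Nat.cast_sub hi, Nat.cast_one]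
  rw [measure_box h1, habs] at hscale
  rw [ENNReal.ofReal_mul (by positivity), ← hscale, hexp,
    ENNReal.ofReal_inv_of_pos (by positivity), ← mul_assoc,
    ENNReal.inv_mul_cancel (by simpa using by positivity) (by simp), one_mul]
  refine measure_mono fun v hv k => ?_
  rw [← absv_le_iff]
  exact (hv.2 k).le
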